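/- Let A be an n × n matrix with real entries, regarded also as a complex matrix via entrywise inclusion ℝ ↪ ℂ, and let x₀ ∈ ℝⁿ. Let p, q be polynomials with real coefficients, q monic of degree k = 2m, deg p ≤ k, such that over ℂ the roots of q are θ₁, …, θ_m together with their conjugates θ̄₁, …, θ̄_m, all 2m pairwise distinct. Assume that for each j the complex matrix A − θⱼ·I is invertible. Then: (i) the complex matrix A − θ̄ⱼ·I is invertible for each j, (ii) the matrix q(A) (evaluation of q at A) is invertible, and (iii) the real vector q(A)⁻¹ p(A) x₀ satisfies q(A)⁻¹ p(A) x₀ = α₀ x₀ + 2 · Re( Σ_{j=1}^{m} αⱼ · (A − θⱼ·I)⁻¹ x₀ ), where α₀ is the coefficient of X^k in p, αⱼ = p(θⱼ)/q'(θⱼ) ∈ ℂ, the inverses and scalar multiplications on the right-hand side are taken over ℂ, and Re is applied entrywise. -/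

import Mathlib

open Polynomial Matrix


lemma cram_pfd_poly {ι : Type*} [Fintype ι] [DecidableEq ι] (v : ι → ℂ)
    (hv : Function.Injective v) (P : Polynomial ℂ) (hP : P.natDegree ≤ Fintype.card ι) :
    P = C (P.coeff (Fintype.card ι)) * Lagrange.nodal Finset.univ v +
      ∑ i, C (P.eval (v i) / (derivative (Lagrange.nodal Finset.univ v)).eval (v i)) *
        Lagrange.nodal (Finset.univ.erase i) v := by
  set Q := Lagrange.nodal Finset.univ v with hQ
  have hQm : Q.Monic := Lagrange.nodal_monic
  have hQd : Q.natDegree = Fintype.card ι := by rw [hQ, Lagrange.natDegree_nodal]; rfl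
  have hdeg : (P - C (P.coeff (Fintype.card ι)) * Q).degree <
      ((Finset.univ : Finset ι).card : WithBot ℕ) := by
    rw [Polynomial.degree_lt_iff_coeff_zero]
    intro k hk
    rw [Finset.card_univ] at hk
    rw [coeff_sub, coeff_C_mul]
    rcases hk.eq_or_lt with h | h
    · rw [← h, ← hQd, hQm.coeff_natDegree, mul_one, sub_self]
    · rw [coeff_eq_zero_of_natDegree_lt (hP.trans_lt h),
        coeff_eq_zero_of_natDegree_lt (hQd.trans_lt h)]
      simp
  rw [← sub_eq_iff_eq_add']
  refine Polynomial.eq_of_degrees_lt_of_eval_index_eq (s := Finset.univ) (v := v) hv.injOn hdeg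
    ?_ ?_
  · refine lt_of_le_of_lt (Polynomial.degree_sum_le _ _) ?_
    rw [Finset.sup_lt_iff (by exact WithBot.bot_lt_coe _)]
    intro i hi
    rw [C_mul']
    refine lt_of_le_of_lt (Polynomial.degree_smul_le _ _) ?_
    rw [Lagrange.degree_nodal]
    exact_mod_cast Finset.card_erase_lt_of_mem hi
  · intro i hi
    rw [eval_sub, eval_mul, hQ, Lagrange.eval_nodal_at_node hi, mul_zero, sub_zero,
      eval_finsetSum, Finset.sum_eq_single i]
    · rw [eval_mul, eval_C, Lagrange.eval_nodal_derivative_eval_node_eq hi, div_mul_cancel₀]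
      rw [Lagrange.eval_nodal, Finset.prod_ne_zero_iff]
      intro j hj
      exact sub_ne_zero.2 (fun h => (Finset.mem_erase.1 hj).1 (hv h).symm)
    · intro j _ hj
      rw [eval_mul, Lagrange.eval_nodal_at_node (Finset.mem_erase.2 ⟨hj.symm, hi⟩), mul_zero]
    · simp

lemma cram_pfd_complex {ι : Type*} [Fintype ι] [DecidableEq ι] {n : ℕ} (v : ι → ℂ)
    (hv : Function.Injective v) (P : Polynomial ℂ) (hP : P.natDegree ≤ Fintype.card ι)
    (B : Matrix (Fin n) (Fin n) ℂ) (hB : ∀ i, IsUnit (B - v i • (1 : Matrix (Fin n) (Fin n) ℂ))) :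
    IsUnit (aeval B (Lagrange.nodal Finset.univ v)) ∧
    aeval B P = aeval B (Lagrange.nodal Finset.univ v) *
      (P.coeff (Fintype.card ι) • (1 : Matrix (Fin n) (Fin n) ℂ) +
      ∑ i, (P.eval (v i) / (derivative (Lagrange.nodal Finset.univ v)).eval (v i)) •
        (B - v i • (1 : Matrix (Fin n) (Fin n) ℂ))⁻¹) := by
  have hX : ∀ i, aeval B (X - C (v i)) = B - v i • (1 : Matrix (Fin n) (Fin n) ℂ) := by
    intro i
    rw [map_sub, aeval_X, aeval_C, Algebra.algebraMap_eq_smul_one]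
  have hN : ∀ i, aeval B (Lagrange.nodal Finset.univ v) =
      aeval B (Lagrange.nodal (Finset.univ.erase i) v) *
        (B - v i • (1 : Matrix (Fin n) (Fin n) ℂ)) := by
    intro i
    rw [Lagrange.nodal_eq_mul_nodal_erase (Finset.mem_univ i), mul_comm, map_mul, hX]
  constructor
  · have : ∀ s : Finset ι, IsUnit (aeval B (Lagrange.nodal s v)) := by
      intro s
      induction s using Finset.induction_on with
      | empty => simp
      | insert a s ha ih =>
        rw [Lagrange.nodal_insert_eq_nodal ha, map_mul, hX]
        exact (hB a).mul ih
    exact this _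
  · conv_lhs => rw [cram_pfd_poly v hv P hP]
    rw [map_add, map_mul, aeval_C, Algebra.algebraMap_eq_smul_one, map_sum, mul_add,
      Finset.mul_sum]
    congr 1
    · simp
    · refine Finset.sum_congr rfl fun i _ => ?_
      rw [map_mul, aeval_C, Algebra.algebraMap_eq_smul_one, mul_smul_comm, smul_mul_assoc, one_mul,
        hN i, mul_assoc, Matrix.mul_nonsing_inv _ ((Matrix.isUnit_iff_isUnit_det _).1 (hB i)),
        mul_one]

lemma cram_aeval_map {n : ℕ} (A : Matrix (Fin n) (Fin n) ℝ) (f : Polynomial ℝ) :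
    (aeval A f).map (algebraMap ℝ ℂ) = aeval (A.map (algebraMap ℝ ℂ)) (f.map (algebraMap ℝ ℂ)) := by
  rw [Polynomial.aeval_map_algebraMap]
  exact (Polynomial.aeval_algHom_apply (Algebra.ofId ℝ ℂ).mapMatrix A f).symm

lemma cram_conj_map {n : ℕ} (A : Matrix (Fin n) (Fin n) ℝ) (z : ℂ) :
    (starRingEnd ℂ).mapMatrix (A.map (algebraMap ℝ ℂ) - z • (1 : Matrix (Fin n) (Fin n) ℂ)) =
    A.map (algebraMap ℝ ℂ) - starRingEnd ℂ z • (1 : Matrix (Fin n) (Fin n) ℂ) := by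
  ext i j
  by_cases h : i = j <;> simp [h]

lemma cram_mulVec_map {n : ℕ} (M : Matrix (Fin n) (Fin n) ℝ) (x : Fin n → ℝ) :
    M.map (algebraMap ℝ ℂ) *ᵥ (fun i => (x i : ℂ)) = fun i => (((M *ᵥ x) i : ℝ) : ℂ) := by
  ext i
  simp [Matrix.mulVec, dotProduct]

/-- Partial fraction evaluation of the rational matrix function `q(A)⁻¹ p(A)` applied to a
real vector, folded over the conjugate pairs of poles. -/
theorem cram_matrix_pfd (n m : ℕ) (A : Matrix (Fin n) (Fin n) ℝ) (x₀ : Fin n → ℝ)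
    (p q : Polynomial ℝ) (hq : q.Monic) (hqdeg : q.natDegree = 2 * m)
    (hp : p.natDegree ≤ 2 * m) (θ : Fin m → ℂ)
    (hfact : q.map (algebraMap ℝ ℂ) =
      ∏ j : Fin m, ((X - C (θ j)) * (X - C (starRingEnd ℂ (θ j)))))
    (hinj : Function.Injective θ)
    (hdistinct : ∀ i j, θ i ≠ starRingEnd ℂ (θ j))
    (hinv : ∀ j, IsUnit (A.map (algebraMap ℝ ℂ) - θ j • (1 : Matrix (Fin n) (Fin n) ℂ))) :
    (∀ j, IsUnit (A.map (algebraMap ℝ ℂ) -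
        starRingEnd ℂ (θ j) • (1 : Matrix (Fin n) (Fin n) ℂ))) ∧
    IsUnit (aeval A q) ∧
    (aeval A q)⁻¹ *ᵥ ((aeval A p) *ᵥ x₀) = fun i =>
      p.coeff (2 * m) * x₀ i +
      2 * ((∑ j : Fin m,
        ((p.map (algebraMap ℝ ℂ)).eval (θ j) /
            (derivative (q.map (algebraMap ℝ ℂ))).eval (θ j)) •
          ((A.map (algebraMap ℝ ℂ) - θ j • 1)⁻¹ *ᵥ fun i' => (x₀ i' : ℂ))) i).re := by
  have hinv' : ∀ j, IsUnit (A.map (algebraMap ℝ ℂ) -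
        starRingEnd ℂ (θ j) • (1 : Matrix (Fin n) (Fin n) ℂ)) := by
    intro j
    rw [← cram_conj_map]
    exact (hinv j).map _
  let v : Fin m ⊕ Fin m → ℂ := Sum.elim θ (fun j => starRingEnd ℂ (θ j))
  have hv : Function.Injective v := by
    refine hinj.sumElim ((starRingEnd ℂ).injective.comp hinj) hdistinct
  have hcard : Fintype.card (Fin m ⊕ Fin m) = 2 * m := by simp [two_mul]
  have hQ : q.map (algebraMap ℝ ℂ) = Lagrange.nodal Finset.univ v := by
    rw [hfact, Lagrange.nodal_eq, Fintype.prod_sum_type, Finset.prod_mul_distrib]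
    rfl
  obtain ⟨hU, hE⟩ := cram_pfd_complex v hv (p.map (algebraMap ℝ ℂ))
    (natDegree_map_le.trans (hp.trans hcard.ge)) (A.map (algebraMap ℝ ℂ))
    (by rintro (j | j); exacts [hinv j, hinv' j])
  rw [← hQ, ← cram_aeval_map] at hU hE
  rw [← cram_aeval_map] at hE
  have hUq : IsUnit (aeval A q) := by
    rw [Matrix.isUnit_iff_isUnit_det] at hU ⊢
    rw [← RingHom.mapMatrix_apply, ← RingHom.map_det] at hU
    rw [isUnit_iff_ne_zero] at hU ⊢
    intro h
    exact hU (by rw [h, map_zero])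
  refine ⟨hinv', hUq, ?_⟩
  set y := (aeval A q)⁻¹ *ᵥ ((aeval A p) *ᵥ x₀) with hy
  have hqy : aeval A q *ᵥ y = aeval A p *ᵥ x₀ := by
    rw [hy, Matrix.mulVec_mulVec, Matrix.mul_nonsing_inv _ ((Matrix.isUnit_iff_isUnit_det _).1 hUq),
      Matrix.one_mulVec]
  have h1 := cram_mulVec_map (aeval A q) y
  rw [hqy, ← cram_mulVec_map (aeval A p) x₀, hE, ← Matrix.mulVec_mulVec] at h1
  have h2 := Matrix.mulVec_injective_of_isUnit hU h1
  rw [Matrix.add_mulVec, Matrix.sum_mulVec, Fintype.sum_sum_type, hcard] at h2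
  have hconj : ∀ j i, (((p.map (algebraMap ℝ ℂ)).eval (v (Sum.inr j)) /
        (derivative (q.map (algebraMap ℝ ℂ))).eval (v (Sum.inr j))) •
        (A.map (algebraMap ℝ ℂ) - v (Sum.inr j) • (1 : Matrix (Fin n) (Fin n) ℂ))⁻¹ *ᵥ
          fun i' => (x₀ i' : ℂ)) i = starRingEnd ℂ ((((p.map (algebraMap ℝ ℂ)).eval (θ j) /
            (derivative (q.map (algebraMap ℝ ℂ))).eval (θ j)) •
          ((A.map (algebraMap ℝ ℂ) - θ j • 1)⁻¹ *ᵥ fun i' => (x₀ i' : ℂ))) i) := by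
    intro j i
    have hev : ∀ f : Polynomial ℝ, (f.map (algebraMap ℝ ℂ)).eval (starRingEnd ℂ (θ j)) =
        starRingEnd ℂ ((f.map (algebraMap ℝ ℂ)).eval (θ j)) := by
      intro f
      rw [eval_map_algebraMap, eval_map_algebraMap]
      exact Polynomial.aeval_conj f (θ j)
    have hI : (A.map (algebraMap ℝ ℂ) -
        starRingEnd ℂ (θ j) • (1 : Matrix (Fin n) (Fin n) ℂ))⁻¹ =
        (starRingEnd ℂ).mapMatrix (A.map (algebraMap ℝ ℂ) - θ j • 1)⁻¹ := by
      refine Matrix.inv_eq_right_inv ?_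
      rw [← cram_conj_map, ← map_mul,
        Matrix.mul_nonsing_inv _ ((Matrix.isUnit_iff_isUnit_det _).1 (hinv j)), map_one]
    change (((p.map (algebraMap ℝ ℂ)).eval (starRingEnd ℂ (θ j)) /
        (derivative (q.map (algebraMap ℝ ℂ))).eval (starRingEnd ℂ (θ j))) •
        (A.map (algebraMap ℝ ℂ) - starRingEnd ℂ (θ j) • (1 : Matrix (Fin n) (Fin n) ℂ))⁻¹ *ᵥ
          fun i' => (x₀ i' : ℂ)) i = _
    rw [hI, derivative_map, hev, hev, Pi.smul_apply, Pi.smul_apply,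
      smul_eq_mul, smul_eq_mul, map_mul, map_div₀]
    congr 1
    simp [Matrix.mulVec, dotProduct]
  funext i
  have h3 := congrArg Complex.re (congrFun h2 i)
  simp only [Matrix.smul_mulVec, Matrix.one_mulVec, Pi.add_apply, Finset.sum_apply, hconj] at h3
  rw [← map_sum] at h3
  simp only [Complex.add_re, Complex.conj_re] at h3
  have h4 : (((p.map (algebraMap ℝ ℂ)).coeff (2 * m) • fun i' => (x₀ i' : ℂ)) i).re =
      p.coeff (2 * m) * x₀ i := by
    simp [coeff_map]
  rw [h4] at h3
  rw [Finset.sum_apply, two_mul (Complex.re _)]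
  exact h3
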